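/- Suppose Assumption A1 holds. For each i let b_i = ∑_{j ∈ V_p} C_{ji} a_j/(1 − a_j), and suppose b_i ≤ a_i/(1 − a_i) + 2(n − 2)/n for all i ∈ V_p. Let H = Γ_n(0, ν) where ν_i ≥ 1/n + b_i/4 for i ∈ V_f and ν_i = 1/2 for i ∈ V_p. Then H is positively invariant under the perception dynamics with reflected appraisals (system (11)), and every trajectory of system (11) starting in H converges exponentially (there exist c > 0 and λ ∈ (0,1) with ‖p(s) − p*‖ ≤ c λ^s for all s) to the unique equilibrium p* of system (11) in Δ_n. -/

import Mathlib

/-!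
Writing `d j = a j / (1 - a j)`, the map of system (11) is
`F p i = a i * p i ^ 2 + (1 - a i) * ∑ j, C j i * d j * (p j * (1 - p j)) + (1 - a i) / n`
(`percMap_apply`). Coordinates `j` with `a j = 0` never enter the right-hand side, and the others
lie in `[0, 1/2]` on the box `H`; there `t * (1 - t) ≤ 1/4`, and with the bound on `b` this gives
the invariance of `H`.

Convergence follows from a contraction in the weighted `ℓ¹` norm `∑ i, |x i| / (1 - a i)`. Since
the rows of `C` sum to one, the `j`-th coordinates `s, t ∈ [0, 1/2]` contribute at most
`d j * (|s ^ 2 - t ^ 2| + |s * (1 - s) - t * (1 - t)|) = d j * |s - t|` to the distance of the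
images, and `d j = a j * (1 / (1 - a j))`, so the factor is `max a < 1` (`wnorm_percMap_sub_le`).
The displacement `F p - p` attains its minimal norm on the compact set `H`, and by contraction the
minimum is zero: `F` has a fixed point in `H`. Weighting the fixed-point equation by `1 / (1 - a i)`
and summing shows that its coordinates add up to one, so it is an equilibrium in the simplex and
hence equals `pstar`.
-/

open Matrix Finset

/-- `W(x) = diag(x) + (I - diag(x)) C`. -/
noncomputable def Wmat (n : ℕ) (C : Matrix (Fin n) (Fin n) ℝ) (x : Fin n → ℝ) :
    Matrix (Fin n) (Fin n) ℝ :=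
  Matrix.diagonal x + (1 - Matrix.diagonal x) * C

/-- The map of system (11): `p ↦ (I - A) W(p)ᵀ A (I - A)⁻¹ p + (I - A) 𝟙 / n`. -/
noncomputable def percMap (n : ℕ) (C : Matrix (Fin n) (Fin n) ℝ) (a : Fin n → ℝ)
    (p : Fin n → ℝ) : Fin n → ℝ :=
  ((1 - Matrix.diagonal a) * (Wmat n C p)ᵀ * Matrix.diagonal a *
      (1 - Matrix.diagonal a)⁻¹) *ᵥ p
    + (1 / (n : ℝ)) • ((1 - Matrix.diagonal a) *ᵥ (fun _ => (1 : ℝ)))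

/-- The `n`-simplex `Δ_n`. -/
def simplex (n : ℕ) : Set (Fin n → ℝ) := {x | (∀ i, 0 ≤ x i) ∧ ∑ i, x i = 1}

/-- The box `Γ_n(y, z) = {x : y ≤ x ≤ z}`. -/
def box (n : ℕ) (y z : Fin n → ℝ) : Set (Fin n → ℝ) := {x | ∀ i, y i ≤ x i ∧ x i ≤ z i}

lemma percMap_apply {n : ℕ} (C : Matrix (Fin n) (Fin n) ℝ) (a : Fin n → ℝ) (ha1 : ∀ i, a i < 1)
    (p : Fin n → ℝ) (i : Fin n) :
    percMap n C a p i = a i * p i ^ 2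
      + (1 - a i) * ∑ j, C j i * (a j / (1 - a j)) * (p j * (1 - p j)) + (1 - a i) / n := by
  have hne : ∀ j, 1 - a j ≠ 0 := fun j => (sub_pos.2 (ha1 j)).ne'
  have h1 : (1 - Matrix.diagonal a : Matrix (Fin n) (Fin n) ℝ)
      = Matrix.diagonal (fun j => 1 - a j) := by
    rw [← Matrix.diagonal_one, Matrix.diagonal_sub]
  have h2 : (1 - Matrix.diagonal a : Matrix (Fin n) (Fin n) ℝ)⁻¹
      = Matrix.diagonal (fun j => (1 - a j)⁻¹) := by
    rw [h1]
    apply Matrix.inv_eq_right_inv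
    rw [Matrix.diagonal_mul_diagonal, ← Matrix.diagonal_one]
    congr 1
    funext j
    exact mul_inv_cancel₀ (hne j)
  have h3 : (1 - Matrix.diagonal p : Matrix (Fin n) (Fin n) ℝ)
      = Matrix.diagonal (fun j => 1 - p j) := by
    rw [← Matrix.diagonal_one, Matrix.diagonal_sub]
  have hterm : ∀ j, ((1 - a i) * (Wmat n C p) j i * a j * (1 - a j)⁻¹) * p j
      = (if j = i then a i * p i ^ 2 else 0)
        + (1 - a i) * (C j i * (a j / (1 - a j)) * (p j * (1 - p j))) := by
    intro j
    have hW : Wmat n C p j i = (if j = i then p j else 0) + (1 - p j) * C j i := by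
      rw [Wmat, h3, Matrix.add_apply, Matrix.diagonal_mul, Matrix.diagonal_apply]
    rw [hW]
    split_ifs with h
    · subst h
      have := hne j
      field_simp
    · ring
  unfold percMap
  rw [h2, h1]
  simp only [Pi.add_apply, Pi.smul_apply, smul_eq_mul, mul_one,
    Matrix.mulVec, dotProduct, Matrix.mul_diagonal, Matrix.diagonal_mul, Matrix.transpose_apply]
  simp only [hterm, Finset.sum_add_distrib, Finset.sum_ite_eq', Finset.mem_univ, if_true,
    ← Finset.mul_sum]
  simp [Matrix.diagonal_apply]
  ring

/-- The `ℓ¹` norm with weights `1 / (1 - a i)`, in which system (11) contracts. -/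
noncomputable def wnorm {n : ℕ} (a x : Fin n → ℝ) : ℝ := ∑ i, |x i| / (1 - a i)

lemma wnorm_nonneg {n : ℕ} {a : Fin n → ℝ} (ha1 : ∀ i, a i < 1) (x : Fin n → ℝ) :
    0 ≤ wnorm a x :=
  Finset.sum_nonneg fun i _ => div_nonneg (abs_nonneg _) (sub_pos.2 (ha1 i)).le

lemma norm_le_wnorm {n : ℕ} {a : Fin n → ℝ} (ha0 : ∀ i, 0 ≤ a i) (ha1 : ∀ i, a i < 1)
    (x : Fin n → ℝ) : ‖x‖ ≤ wnorm a x := by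
  rw [pi_norm_le_iff_of_nonneg (wnorm_nonneg ha1 x)]
  intro i
  have h1 : |x i| ≤ |x i| / (1 - a i) :=
    le_div_self (abs_nonneg _) (sub_pos.2 (ha1 i)) (by linarith [ha0 i])
  exact h1.trans (Finset.single_le_sum (f := fun i => |x i| / (1 - a i))
    (fun j _ => div_nonneg (abs_nonneg _) (sub_pos.2 (ha1 j)).le) (Finset.mem_univ i))

lemma continuous_percMap {n : ℕ} (C : Matrix (Fin n) (Fin n) ℝ) (a : Fin n → ℝ)
    (ha1 : ∀ i, a i < 1) : Continuous (percMap n C a) := by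
  refine continuous_pi fun i => ?_
  simp only [percMap_apply C a ha1]
  fun_prop

/-- The squares and the values of `t * (1 - t)` move by exactly `|s - t|` in total, because both
functions increase on `[0, 1/2]` and their sum is the identity. -/
lemma abs_sq_sub_add_abs {s t : ℝ} (hs : 0 ≤ s ∧ s ≤ 1 / 2) (ht : 0 ≤ t ∧ t ≤ 1 / 2) :
    |s ^ 2 - t ^ 2| + |s * (1 - s) - t * (1 - t)| = |s - t| := by
  have e1 : s ^ 2 - t ^ 2 = (s - t) * (s + t) := by ring
  have e2 : s * (1 - s) - t * (1 - t) = (s - t) * (1 - s - t) := by ring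
  rw [e1, e2, abs_mul, abs_mul, abs_of_nonneg (show 0 ≤ s + t by linarith),
    abs_of_nonneg (show 0 ≤ 1 - s - t by linarith)]
  ring

lemma wnorm_percMap_sub_le {n : ℕ} {C : Matrix (Fin n) (Fin n) ℝ} (hC0 : ∀ i j, 0 ≤ C i j)
    (hCrow : ∀ i, ∑ j, C i j = 1) {a : Fin n → ℝ} (ha0 : ∀ i, 0 ≤ a i) (ha1 : ∀ i, a i < 1)
    {r : ℝ} (hr : ∀ i, a i ≤ r) {p q : Fin n → ℝ}
    (hp : ∀ i, 0 < a i → 0 ≤ p i ∧ p i ≤ 1 / 2) (hq : ∀ i, 0 < a i → 0 ≤ q i ∧ q i ≤ 1 / 2) :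
    wnorm a (percMap n C a p - percMap n C a q) ≤ r * wnorm a (p - q) := by
  have hpos : ∀ j, 0 < 1 - a j := fun j => sub_pos.2 (ha1 j)
  have hd : ∀ j, 0 ≤ a j / (1 - a j) := fun j => div_nonneg (ha0 j) (hpos j).le
  have hstep : ∀ i, |(percMap n C a p - percMap n C a q) i| / (1 - a i)
      ≤ a i / (1 - a i) * |p i ^ 2 - q i ^ 2|
        + ∑ j, C j i * (a j / (1 - a j) * |p j * (1 - p j) - q j * (1 - q j)|) := by
    intro i
    have e : (percMap n C a p - percMap n C a q) i = (1 - a i) *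
        (a i / (1 - a i) * (p i ^ 2 - q i ^ 2)
        + ∑ j, C j i * (a j / (1 - a j) * (p j * (1 - p j) - q j * (1 - q j)))) := by
      have h := (hpos i).ne'
      have es : ∑ j, C j i * (a j / (1 - a j) * (p j * (1 - p j) - q j * (1 - q j)))
          = ∑ j, C j i * (a j / (1 - a j)) * (p j * (1 - p j))
            - ∑ j, C j i * (a j / (1 - a j)) * (q j * (1 - q j)) := by
        rw [← Finset.sum_sub_distrib]
        exact Finset.sum_congr rfl fun j _ => by ring
      rw [Pi.sub_apply, percMap_apply C a ha1, percMap_apply C a ha1, es]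
      field_simp
      ring
    rw [e, abs_mul, abs_of_pos (hpos i), mul_div_cancel_left₀ _ (hpos i).ne']
    refine (abs_add_le _ _).trans (add_le_add ?_ ((Finset.abs_sum_le_sum_abs _ _).trans ?_))
    · rw [abs_mul, abs_of_nonneg (hd i)]
    · refine Finset.sum_le_sum fun j _ => ?_
      rw [abs_mul, abs_mul, abs_of_nonneg (hd j), abs_of_nonneg (hC0 j i)]
  calc wnorm a (percMap n C a p - percMap n C a q)
      ≤ ∑ i, (a i / (1 - a i) * |p i ^ 2 - q i ^ 2|
        + ∑ j, C j i * (a j / (1 - a j) * |p j * (1 - p j) - q j * (1 - q j)|)) :=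
        Finset.sum_le_sum fun i _ => hstep i
    _ = ∑ j, a j / (1 - a j)
          * (|p j ^ 2 - q j ^ 2| + |p j * (1 - p j) - q j * (1 - q j)|) := by
        rw [Finset.sum_add_distrib, Finset.sum_comm, ← Finset.sum_add_distrib]
        refine Finset.sum_congr rfl fun j _ => ?_
        rw [← Finset.sum_mul, hCrow j]
        ring
    _ ≤ ∑ j, r * (|(p - q) j| / (1 - a j)) := by
        refine Finset.sum_le_sum fun j _ => ?_
        rcases (ha0 j).eq_or_lt with h | h
        · rw [← h]
          have hr0 : 0 ≤ r := (ha0 j).trans (hr j)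
          have := abs_nonneg ((p - q) j)
          simp only [zero_mul, sub_zero, div_one]
          positivity
        · rw [abs_sq_sub_add_abs (hp j h) (hq j h), Pi.sub_apply, div_mul_eq_mul_div,
            mul_div_assoc]
          exact mul_le_mul_of_nonneg_right (hr j) (div_nonneg (abs_nonneg _) (hpos j).le)
    _ = r * wnorm a (p - q) := by rw [wnorm, Finset.mul_sum]

/-- Dividing the fixed-point equation by `1 - a i` and summing over `i`, the quadratic terms cancel
and what remains is `∑ i, p i / (1 - a i) = ∑ i, a i * p i / (1 - a i) + 1`. -/
lemma sum_eq_one_of_percMap_eq {n : ℕ} (hn : 0 < n) {C : Matrix (Fin n) (Fin n) ℝ}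
    (hCrow : ∀ i, ∑ j, C i j = 1) {a : Fin n → ℝ} (ha1 : ∀ i, a i < 1)
    {p : Fin n → ℝ} (h : percMap n C a p = p) : ∑ i, p i = 1 := by
  have hne : ∀ j, 1 - a j ≠ 0 := fun j => (sub_pos.2 (ha1 j)).ne'
  have hn' : (n : ℝ) ≠ 0 := by positivity
  have hi : ∀ i, p i = (a i / (1 - a i) * p i ^ 2
      - a i / (1 - a i) * p i) + ∑ j, C j i * (a j / (1 - a j) * (p j * (1 - p j))) + 1 / n := by
    intro i
    have h' := congrFun h i
    rw [percMap_apply C a ha1] at h'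
    have h1 := hne i
    simp only [mul_assoc] at h' ⊢
    generalize (∑ j, C j i * (a j / (1 - a j) * (p j * (1 - p j)))) = S at h' ⊢
    field_simp at h' ⊢
    linarith
  rw [Finset.sum_congr rfl fun i _ => hi i, Finset.sum_add_distrib, Finset.sum_add_distrib,
    Finset.sum_comm (f := fun i j => C j i * (a j / (1 - a j) * (p j * (1 - p j)))),
    ← Finset.sum_add_distrib]
  have hz : ∀ j, (a j / (1 - a j) * p j ^ 2 - a j / (1 - a j) * p j)
      + ∑ i, C j i * (a j / (1 - a j) * (p j * (1 - p j))) = 0 := by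
    intro j
    rw [← Finset.sum_mul, hCrow j]
    ring
  simp [hz, hn']

/-- Theorem 6(i): invariance of `H = Γ_n(0, ν)` and exponential
convergence of system (11) to the unique equilibrium `p*` in `Δ_n`. -/
theorem invariance_and_convergence_H
    (n : ℕ) (hn : 2 ≤ n)
    (C : Matrix (Fin n) (Fin n) ℝ)
    (hC0 : ∀ i j, 0 ≤ C i j) (hCrow : ∀ i, ∑ j, C i j = 1) (hCdiag : ∀ i, C i i = 0)
    (a : Fin n → ℝ) (ha0 : ∀ i, 0 ≤ a i) (ha1 : ∀ i, a i < 1) (hane : a ≠ 0)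
    (b : Fin n → ℝ)
    (hb : ∀ i, b i = ∑ j ∈ Finset.univ.filter (fun j => 0 < a j), C j i * (a j / (1 - a j)))
    (hcond : ∀ i, 0 < a i → b i ≤ a i / (1 - a i) + 2 * ((n : ℝ) - 2) / n)
    (ν : Fin n → ℝ)
    (hνf : ∀ i, a i = 0 → 1 / (n : ℝ) + b i / 4 ≤ ν i)
    (hνp : ∀ i, 0 < a i → ν i = 1 / 2)
    (pstar : Fin n → ℝ) (hps : pstar ∈ simplex n) (hpe : percMap n C a pstar = pstar)
    (hpuniq : ∀ q ∈ simplex n, percMap n C a q = q → q = pstar) :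
    (∀ p ∈ box n 0 ν, percMap n C a p ∈ box n 0 ν) ∧
    (∀ p : ℕ → Fin n → ℝ, (∀ s, p (s + 1) = percMap n C a (p s)) → p 0 ∈ box n 0 ν →
      ∃ c > 0, ∃ lam ∈ Set.Ioo (0 : ℝ) 1, ∀ s : ℕ, ‖p s - pstar‖ ≤ c * lam ^ s) := by
  have hn0 : 0 < n := by omega
  have hnR : (0 : ℝ) < n := by exact_mod_cast hn0
  have hpos : ∀ j, 0 < 1 - a j := fun j => sub_pos.2 (ha1 j)
  have hd : ∀ j, 0 ≤ a j / (1 - a j) := fun j => div_nonneg (ha0 j) (hpos j).le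
  have hb' : ∀ i, b i = ∑ j, C j i * (a j / (1 - a j)) := by
    intro i
    rw [hb i]
    refine Finset.sum_subset (Finset.filter_subset _ _) fun j _ hj => ?_
    have hj0 : a j = 0 := le_antisymm (by simpa using hj) (ha0 j)
    simp [hj0]
  have hhalf : ∀ p ∈ box n 0 ν, ∀ i, 0 < a i → 0 ≤ p i ∧ p i ≤ 1 / 2 := by
    intro p hp i hi
    have := hp i
    rwa [hνp i hi] at this
  have hinv : ∀ p ∈ box n 0 ν, percMap n C a p ∈ box n 0 ν := by
    intro p hp i
    have hsum0 : 0 ≤ ∑ j, C j i * (a j / (1 - a j)) * (p j * (1 - p j)) := by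
      refine Finset.sum_nonneg fun j _ => ?_
      rcases (ha0 j).eq_or_lt with h | h
      · simp [← h]
      · obtain ⟨h1, h2⟩ := hhalf p hp j h
        exact mul_nonneg (mul_nonneg (hC0 j i) (hd j)) (mul_nonneg h1 (by linarith))
    have hsum1 : ∑ j, C j i * (a j / (1 - a j)) * (p j * (1 - p j)) ≤ b i / 4 := by
      rw [hb' i, Finset.sum_div]
      refine Finset.sum_le_sum fun j _ => ?_
      rw [div_eq_mul_one_div _ (4 : ℝ)]
      exact mul_le_mul_of_nonneg_left (by nlinarith [sq_nonneg (p j - 1 / 2)])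
        (mul_nonneg (hC0 j i) (hd j))
    rw [percMap_apply C a ha1]
    generalize (∑ j, C j i * (a j / (1 - a j)) * (p j * (1 - p j))) = S at hsum0 hsum1
    constructor
    · have h1 := mul_nonneg (ha0 i) (sq_nonneg (p i))
      have h2 := mul_nonneg (hpos i).le hsum0
      have h3 := div_nonneg (hpos i).le hnR.le
      simp only [Pi.zero_apply]
      linarith
    · rcases (ha0 i).eq_or_lt with h | h
      · have := hνf i h.symm
        rw [← h]
        linarith
      · rw [hνp i h]
        obtain ⟨h1, h2⟩ := hhalf p hp i h
        have hsq : a i * p i ^ 2 ≤ a i * (1 / 4) :=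
          mul_le_mul_of_nonneg_left (by nlinarith) (ha0 i)
        have hS : (1 - a i) * S
            ≤ (1 - a i) * ((a i / (1 - a i) + 2 * ((n : ℝ) - 2) / n) / 4) :=
          mul_le_mul_of_nonneg_left (by linarith [hcond i h]) (hpos i).le
        have hval : a i * (1 / 4) + (1 - a i) * ((a i / (1 - a i) + 2 * ((n : ℝ) - 2) / n) / 4)
            + (1 - a i) / n = 1 / 2 := by
          have := (hpos i).ne'
          field_simp
          ring
        linarith
  refine ⟨hinv, fun p hp hp0 => ?_⟩
  obtain ⟨r, hr0, hr1, hr⟩ : ∃ r, 0 < r ∧ r < 1 ∧ ∀ i, a i ≤ r := by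
    obtain ⟨k, hk⟩ := Function.ne_iff.1 hane
    obtain ⟨m, -, hm⟩ := Finset.exists_max_image Finset.univ a ⟨k, Finset.mem_univ k⟩
    exact ⟨a m, (lt_of_le_of_ne (ha0 k) (Ne.symm hk)).trans_le (hm k (Finset.mem_univ k)), ha1 m,
      fun i => hm i (Finset.mem_univ i)⟩
  have hcontr : ∀ x ∈ box n 0 ν, ∀ y ∈ box n 0 ν,
      wnorm a (percMap n C a x - percMap n C a y) ≤ r * wnorm a (x - y) := fun x hx y hy =>
    wnorm_percMap_sub_le hC0 hCrow ha0 ha1 hr (hhalf x hx) (hhalf y hy)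
  -- The minimizer of the displacement over `H` is a fixed point, and uniqueness makes it `pstar`.
  have hps_mem : pstar ∈ box n 0 ν := by
    have hcpt : IsCompact (box n 0 ν) := by
      have : box n 0 ν = Set.Icc 0 ν := by
        ext x
        exact forall_and
      rw [this]
      exact isCompact_Icc
    have hcont : Continuous fun x => wnorm a (percMap n C a x - x) := by
      have := continuous_percMap C a ha1
      unfold wnorm
      fun_prop
    obtain ⟨m, hm, hmin⟩ := hcpt.exists_isMinOn ⟨p 0, hp0⟩ hcont.continuousOn
    have h1 : wnorm a (percMap n C a m - m)
        ≤ wnorm a (percMap n C a (percMap n C a m) - percMap n C a m) := hmin (hinv m hm)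
    have h2 := hcontr _ (hinv m hm) m hm
    have h3 : wnorm a (percMap n C a m - m) ≤ 0 := by
      nlinarith [wnorm_nonneg ha1 (percMap n C a m - m)]
    have hfix : percMap n C a m = m :=
      sub_eq_zero.1 (norm_le_zero_iff.1 ((norm_le_wnorm ha0 ha1 _).trans h3))
    rw [← hpuniq m ⟨fun i => (hm i).1, sum_eq_one_of_percMap_eq hn0 hCrow ha1 hfix⟩ hfix]
    exact hm
  have hmem : ∀ s, p s ∈ box n 0 ν := by
    intro s
    induction s with
    | zero => exact hp0
    | succ s ih => rw [hp s]; exact hinv _ ih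
  have hdecay : ∀ s, wnorm a (p s - pstar) ≤ wnorm a (p 0 - pstar) * r ^ s := by
    intro s
    induction s with
    | zero => simp
    | succ s ih =>
      have h := hcontr _ (hmem s) _ hps_mem
      rw [hpe, ← hp s] at h
      calc wnorm a (p (s + 1) - pstar) ≤ r * wnorm a (p s - pstar) := h
        _ ≤ r * (wnorm a (p 0 - pstar) * r ^ s) := mul_le_mul_of_nonneg_left ih hr0.le
        _ = wnorm a (p 0 - pstar) * r ^ (s + 1) := by ring
  refine ⟨wnorm a (p 0 - pstar) + 1, by linarith [wnorm_nonneg ha1 (p 0 - pstar)], r,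
    ⟨hr0, hr1⟩, fun s => ?_⟩
  have := pow_pos hr0 s
  linarith [norm_le_wnorm ha0 ha1 (p s - pstar), hdecay s]
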